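/- For every τ in the complex upper half plane, f_{3,0}(τ)·f_{3,1}(τ) = E_{3,2}(τ); moreover f_{3,j}(((−1)ʲ·3 + i√3)/6) = 0 for j ∈ {0,1}. -/

import Mathlib

open Complex

/-- `q = exp(2πiτ)`. -/
noncomputable def qq (τ : ℂ) : ℂ := Complex.exp (2 * Real.pi * Complex.I * τ)

/-- `σ_k(n) = Σ_{d ∣ n} d^k`, as a complex number. -/
noncomputable def sigmaC (k n : ℕ) : ℂ := ∑ d ∈ n.divisors, (d : ℂ) ^ k

/-- Eisenstein series `E₂(τ) = 1 - 24 Σ_{n≥1} σ₁(n) qⁿ`. -/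
noncomputable def E₂ (τ : ℂ) : ℂ := 1 - 24 * ∑' n : ℕ, sigmaC 1 (n + 1) * qq τ ^ (n + 1)

/-- Eisenstein series `E₄(τ) = 1 + 240 Σ_{n≥1} σ₃(n) qⁿ`. -/
noncomputable def E₄ (τ : ℂ) : ℂ := 1 + 240 * ∑' n : ℕ, sigmaC 3 (n + 1) * qq τ ^ (n + 1)

/-- Eisenstein series `E₆(τ) = 1 - 504 Σ_{n≥1} σ₅(n) qⁿ`. -/
noncomputable def E₆ (τ : ℂ) : ℂ := 1 - 504 * ∑' n : ℕ, sigmaC 5 (n + 1) * qq τ ^ (n + 1)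

/-- Dedekind eta function `η(τ) = exp(πiτ/12) ∏_{n≥1} (1 - qⁿ)`. -/
noncomputable def η (τ : ℂ) : ℂ :=
  Complex.exp (Real.pi * Complex.I * τ / 12) * ∏' n : ℕ, (1 - qq τ ^ (n + 1))

/-- Theta function `θ(τ) = Σ_{n ∈ ℤ} q^{n²}`. -/
noncomputable def θ (τ : ℂ) : ℂ := ∑' n : ℤ, qq τ ^ (n ^ 2)

/-- The character `χ₋₄`: `χ₋₄(d) = 1, -1, 0` according as `d ≡ 1, 3, 0/2 (mod 4)`. -/
noncomputable def χ₄ (d : ℕ) : ℂ := if d % 4 = 1 then 1 else if d % 4 = 3 then -1 else 0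

/-- The character `χ₋₃`: `χ₋₃(d) = 1, -1, 0` according as `d ≡ 1, 2, 0 (mod 3)`. -/
noncomputable def χ₃ (d : ℕ) : ℂ := if d % 3 = 1 then 1 else if d % 3 = 2 then -1 else 0

/-- `E_{1,-4}(τ) = 1/4 + Σ_{n≥1} (Σ_{d∣n} χ₋₄(d)) qⁿ`. -/
noncomputable def E₁₄ (τ : ℂ) : ℂ :=
  1 / 4 + ∑' n : ℕ, (∑ d ∈ (n + 1).divisors, χ₄ d) * qq τ ^ (n + 1)

/-- `E_{1,-3}(τ) = 1/6 + Σ_{n≥1} (Σ_{d∣n} χ₋₃(d)) qⁿ`. -/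
noncomputable def E₁₃ (τ : ℂ) : ℂ :=
  1 / 6 + ∑' n : ℕ, (∑ d ∈ (n + 1).divisors, χ₃ d) * qq τ ^ (n + 1)

/-- `E_{2,2}(τ) = 2E₂(2τ) - E₂(τ)`. -/
noncomputable def E₂₂ (τ : ℂ) : ℂ := 2 * E₂ (2 * τ) - E₂ τ

/-- `E_{2,4}(τ) = (4E₄(2τ) - E₄(τ))/3`. -/
noncomputable def E₂₄ (τ : ℂ) : ℂ := (4 * E₄ (2 * τ) - E₄ τ) / 3

/-- `E_{3,2}(τ) = (3E₂(3τ) - E₂(τ))/2`. -/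
noncomputable def E₃₂ (τ : ℂ) : ℂ := (3 * E₂ (3 * τ) - E₂ τ) / 2

/-- `E_{3,4}(τ) = (9E₄(3τ) - E₄(τ))/8`. -/
noncomputable def E₃₄ (τ : ℂ) : ℂ := (9 * E₄ (3 * τ) - E₄ τ) / 8

/-- `E_{4,2}(τ) = (4E₂(4τ) - E₂(τ))/3`. -/
noncomputable def E₄₂ (τ : ℂ) : ℂ := (4 * E₂ (4 * τ) - E₂ τ) / 3

/-- `E'_{4,2}(τ) = 4E₂(4τ) - 4E₂(2τ) + E₂(τ)`. -/
noncomputable def E₄₂' (τ : ℂ) : ℂ := 4 * E₂ (4 * τ) - 4 * E₂ (2 * τ) + E₂ τ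

/-- `f_{1,j}(τ) = 2E₂(τ) - ((3+(-1)ʲi√3)/6)E₂(τ/2) - ((3-(-1)ʲi√3)/6)E₂((τ+1)/2)`. -/
noncomputable def f₁ (j : ℕ) (τ : ℂ) : ℂ :=
  2 * E₂ τ - ((3 + (-1 : ℂ) ^ j * Complex.I * Real.sqrt 3) / 6) * E₂ (τ / 2)
    - ((3 - (-1 : ℂ) ^ j * Complex.I * Real.sqrt 3) / 6) * E₂ ((τ + 1) / 2)

/-- `g_{1,j}(τ) = (3/2)E₂(τ) - (1/4) Σ_{0≤m≤2, m≢j (mod 3)} E₂((τ+m)/3)`. -/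
noncomputable def g₁ (j : ℕ) (τ : ℂ) : ℂ :=
  (3 / 2) * E₂ τ -
    (1 / 4) * ∑ m ∈ (Finset.range 3).filter (fun m => ¬ m % 3 = j % 3), E₂ ((τ + m) / 3)

/-- `f_{2,j}(τ) = 4E_{1,-4}(τ) + (-1)ʲ·2i·(E_{1,-4}(τ/2) - E_{1,-4}((τ+1)/2))`. -/
noncomputable def f₂ (j : ℕ) (τ : ℂ) : ℂ :=
  4 * E₁₄ τ + (-1 : ℂ) ^ j * 2 * Complex.I * (E₁₄ (τ / 2) - E₁₄ ((τ + 1) / 2))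

/-- `f_{3,j}(τ) = 6E_{1,-3}(2τ) + (-1)ʲ·i√3·(E_{1,-3}(τ/2) - E_{1,-3}((τ+1)/2))`. -/
noncomputable def f₃ (j : ℕ) (τ : ℂ) : ℂ :=
  6 * E₁₃ (2 * τ) +
    (-1 : ℂ) ^ j * Complex.I * Real.sqrt 3 * (E₁₃ (τ / 2) - E₁₃ ((τ + 1) / 2))

/-- `f_{4,j}(τ) = θ(τ/2 - (-1)ʲ/4)`. -/
noncomputable def f₄ (j : ℕ) (τ : ℂ) : ℂ := θ (τ / 2 - (-1 : ℂ) ^ j / 4)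

/-- `g_{4,j}(τ) = 2θ(2τ)² - θ((τ+j)/2)²`. -/
noncomputable def g₄ (j : ℕ) (τ : ℂ) : ℂ := 2 * θ (2 * τ) ^ 2 - θ ((τ + j) / 2) ^ 2

/-- `E_{3,-3,1}(τ) = -1/9 + Σ_{n≥1} (Σ_{d∣n} d²χ₋₃(d)) qⁿ`. -/
noncomputable def E₃₃₁ (τ : ℂ) : ℂ :=
  -(1 / 9) + ∑' n : ℕ, (∑ d ∈ (n + 1).divisors, (d : ℂ) ^ 2 * χ₃ d) * qq τ ^ (n + 1)

/-- `E_{3,1,-3}(τ) = Σ_{n≥1} (Σ_{d∣n} d²χ₋₃(n/d)) qⁿ`. -/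
noncomputable def E₃₁₃ (τ : ℂ) : ℂ :=
  ∑' n : ℕ, (∑ d ∈ (n + 1).divisors, (d : ℂ) ^ 2 * χ₃ ((n + 1) / d)) * qq τ ^ (n + 1)

/-!
Write `D_a(q) = ∑_{n ≥ 1} (∑_{d ∣ n} a(d)) qⁿ`. The rational function `κ(x) = x / (1 + x + x²)` is
invariant under `x ↦ 1/x` and has Taylor coefficients `χ₋₃(n)`, so that
`2 E_{1,-3} = ∑_{m ∈ ℤ} κ(q ^ m)`. Squaring this sum and arranging it as
`∑_k ∑_m κ(q ^ m) κ(q ^ (m + k))`, the partial fraction expansion of `κ(x) κ(xy)` in `x` evaluates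
the inner sums up to a telescoping part, and what remains is `(6 E_{1,-3})² = E_{3,2}`.

Both `E_{1,-3}` and `E_{3,2}` are eigenfunctions of the Hecke operator at `2`, in weights `1` and
`2`. With `a`, `b`, `c` the values of `E_{1,-3}` at `τ/2`, `(τ+1)/2`, `2τ`, this says `a + b = 2c`
and expresses `a² + b²` through `c²` and `E_{3,2}(τ)`, while
`f_{3,0} f_{3,1} = 36 c² + 3 (a - b)²`.

Put `u = (3 + i√3)/12` and `w = -1/(3u) = i/√3 - 1`. Complex conjugation and periodicity turn
`f_{3,0}(2u)` into `24 Re(u E_{1,-3}(u))`. The inversion `E_{3,2}(-1/(3τ)) = -3τ² E_{3,2}(τ)` gives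
`3 (u E_{1,-3}(u))² = -E_{1,-3}(w)²` with `E_{1,-3}(w)` real, so `u E_{1,-3}(u)` is purely
imaginary. The case `j = 1` follows from `f_{3,1}(τ) = f_{3,0}(τ + 1)`.
-/

open Filter Topology ComplexConjugate

section NormedDivisionRing

variable {K : Type*} [NormedDivisionRing K] {q x : K}

lemma norm_pow_lt_one (hq : ‖q‖ < 1) {n : ℕ} (hn : n ≠ 0) : ‖q ^ n‖ < 1 := by
  rw [norm_pow]
  exact pow_lt_one₀ (norm_nonneg q) hq hn

lemma one_sub_pow_ne_zero (hq : ‖q‖ < 1) {n : ℕ} (hn : n ≠ 0) : 1 - q ^ n ≠ 0 := by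
  intro h
  simpa [← sub_eq_zero.mp h] using norm_pow_lt_one hq hn

lemma zpow_ne_one (hq : ‖q‖ < 1) {k : ℤ} (hk : k ≠ 0) : q ^ k ≠ 1 := by
  intro h
  have hnorm : ‖q‖ ^ k = 1 := by rw [← norm_zpow, h, norm_one]
  exact hk ((zpow_eq_one_iff_right₀ (norm_nonneg q) hq.ne).mp hnorm)

lemma hasSum_pnat_geometric (hx : ‖x‖ < 1) :
    HasSum (fun m : ℕ+ ↦ x ^ (m : ℕ)) (x / (1 - x)) := by
  have h := (hasSum_geometric_of_norm_lt_one hx).mul_left x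
  simp_rw [← pow_succ', ← div_eq_mul_inv] at h
  exact hasSum_pnat_iff_hasSum_succ.mpr h

end NormedDivisionRing

lemma one_add_add_sq_ne_zero {K : Type*} [NormedField K] {x : K} (hx : ‖x‖ < 1) :
    1 + x + x ^ 2 ≠ 0 := by
  intro h
  refine one_sub_pow_ne_zero hx three_ne_zero ?_
  linear_combination (1 - x) * h

lemma hasSum_pnat_natCast_mul_pow {K : Type*} [NormedField K] [CompleteSpace K] {x : K}
    (hx : ‖x‖ < 1) :
    HasSum (fun n : ℕ+ ↦ (n : K) * x ^ (n : ℕ)) (x / (1 - x) ^ 2) :=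
  (hasSum_pnat_iff (f := fun n ↦ (n : K) * x ^ n)).mpr <| by
    simpa using hasSum_coe_mul_geometric_of_norm_lt_one hx

lemma hasSum_int_of_even {R : Type*} [Ring R] [TopologicalSpace R] [IsTopologicalAddGroup R]
    {f : ℤ → R} {c s : R} (hf : f.Even) (h0 : f 0 = c) (hs : HasSum (fun n : ℕ+ ↦ f n) s) :
    HasSum f (c + 2 * s) := by
  have hnat : HasSum (fun n : ℕ ↦ f n) (s + c) :=
    h0 ▸ (hasSum_pnat_iff (f := fun n : ℕ ↦ f n)).mp hs
  have hint := hnat.of_nat_of_neg (by simpa only [hf _] using hnat)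
  rwa [h0, add_sub_assoc, add_sub_cancel_right, add_right_comm, ← two_mul, add_comm] at hint

lemma hasSum_add_right {α ι : Type*} [AddCommMonoid α] [TopologicalSpace α] [AddGroup ι] {f : ι → α}
    {s : α} (hf : HasSum f s) (k : ι) : HasSum (fun m ↦ f (m + k)) s :=
  (Equiv.addRight k).hasSum_iff.mpr hf

lemma hasSum_int_shift_sub {α : Type*} [AddCommGroup α] [TopologicalSpace α]
    [IsTopologicalAddGroup α] [T2Space α] {h : ℤ → α} {A B : α}
    (hbot : Tendsto (fun n : ℕ ↦ h (-n)) atTop (𝓝 A))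
    (htop : Tendsto (fun n : ℕ ↦ h n) atTop (𝓝 B))
    (hs : Summable fun m ↦ h (m + 1) - h m) (k : ℤ) :
    HasSum (fun m ↦ h (m + k) - h m) (k • (B - A)) := by
  have hone : HasSum (fun m ↦ h (m + 1) - h m) (B - A) := by
    have hlim := hs.hasSum.comp
      (Finset.tendsto_Ico_neg_atTop_atTop.comp (tendsto_natCast_atTop_atTop (R := ℤ)))
    have hpartial (N : ℕ) : ∑ m ∈ Finset.Ico (-N : ℤ) N, (h (m + 1) - h m) = h N - h (-N) := by
      rw [← neg_sub (h (-N)), ← Finset.sum_Ico_int_sub, ← Finset.sum_neg_distrib]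
      simp only [neg_sub]
    simp only [Function.comp_def, hpartial] at hlim
    exact tendsto_nhds_unique hlim (htop.sub hbot) ▸ hs.hasSum
  have hstep (k : ℤ) : HasSum (fun m ↦ h (m + (k + 1)) - h (m + k)) (B - A) := by
    simpa only [add_assoc] using hasSum_add_right hone k
  induction k with
  | zero => simp [hasSum_zero]
  | succ k ih => simpa [add_smul, add_comm] using ih.add (hstep k)
  | pred k ih => simpa [sub_smul] using ih.sub (hstep (-k - 1))

lemma hasSum_odd_of_hasSum_even {α : Type*} [AddCommGroup α] [UniformSpace α]
    [IsUniformAddGroup α] [CompleteSpace α] [T2Space α] {f : ℕ → α} {s t : α} (hf : HasSum f s)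
    (heven : HasSum (fun n ↦ f (2 * n)) t) : HasSum (fun n ↦ f (2 * n + 1)) (s - t) := by
  have hodd : Summable fun n ↦ f (2 * n + 1) :=
    hf.summable.comp_injective (i := fun n ↦ 2 * n + 1) fun m n h ↦ by simpa using h
  rw [hf.unique (heven.even_add_odd hodd.hasSum), add_sub_cancel_left]
  exact hodd.hasSum

lemma hasSum_mul_shift {R ι : Type*} [NormedRing R] [CompleteSpace R] [AddGroup ι] {f g : ι → R}
    (hf : Summable fun m ↦ ‖f m‖) (hg : Summable fun m ↦ ‖g m‖) :
    HasSum (fun p : ι × ι ↦ f p.2 * g (p.2 + p.1)) ((∑' m, f m) * ∑' m, g m) := by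
  have hprod := hf.of_norm.hasSum.mul hg.of_norm.hasSum (summable_mul_of_summable_norm hf hg)
  have hshear := ((Equiv.prodComm ι ι).trans
    ((Equiv.refl ι).prodShear Equiv.addLeft)).hasSum_iff.mpr hprod
  simpa [Function.comp_def] using hshear

lemma ofReal_sqrt_three_sq : (Real.sqrt 3 : ℂ) ^ 2 = 3 := by
  rw [← Complex.ofReal_pow, Real.sq_sqrt (by norm_num)]
  norm_num

lemma re_eq_zero_of_sq_eq_neg_sq {z : ℂ} {r : ℝ} (h : z ^ 2 = -(r : ℂ) ^ 2) : z.re = 0 := by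
  have hfactor : z ^ 2 = (I * r) ^ 2 := by rw [h, mul_pow, I_sq, neg_one_mul]
  rcases sq_eq_sq_iff_eq_or_eq_neg.mp hfactor with rfl | rfl <;> simp

/-- The generating series `∑_{n ≥ 1} (∑_{d ∣ n} a(d)) qⁿ` of the divisor sums of `a`. -/
noncomputable def divisorSeries (a : ℕ → ℂ) (q : ℂ) : ℂ :=
  ∑' n : ℕ, (∑ d ∈ (n + 1).divisors, a d) * q ^ (n + 1)

section DivisorSeries

variable {a : ℕ → ℂ} {C : ℝ} {k : ℕ} {q : ℂ}

lemma summable_mul_pow_mul (ha : ∀ n, ‖a n‖ ≤ C * n ^ k) (hq : ‖q‖ < 1) :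
    Summable fun p : ℕ+ × ℕ+ ↦ a p.1 * q ^ (p.1 * p.2 : ℕ) := by
  refine Summable.of_norm_bounded ((summable_prod_mul_pow k hq).prod_symm.norm.mul_left C) ?_
  rintro ⟨d, m⟩
  rw [norm_mul, Prod.swap_prod_mk, norm_mul, ← mul_assoc, mul_comm (m : ℕ)]
  gcongr
  simpa using ha d

lemma hasSum_divisorSeries_prod (ha : ∀ n, ‖a n‖ ≤ C * n ^ k) (hq : ‖q‖ < 1) :
    HasSum (fun p : ℕ+ × ℕ+ ↦ a p.1 * q ^ (p.1 * p.2 : ℕ)) (divisorSeries a q) := by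
  set f : ℕ+ × ℕ+ → ℂ := fun p ↦ a p.1 * q ^ (p.1 * p.2 : ℕ) with hf
  have hs : Summable f := summable_mul_pow_mul ha hq
  have hfiber (n : ℕ+) : HasSum (fun x ↦ f (sigmaAntidiagonalEquivProd ⟨n, x⟩))
      ((∑ d ∈ (n : ℕ).divisors, a d) * q ^ (n : ℕ)) := by
    convert hasSum_fintype fun x ↦ f (sigmaAntidiagonalEquivProd ⟨n, x⟩) using 1
    simp only [hf, sigmaAntidiagonalEquivProd, divisorsAntidiagonalFactors, Equiv.coe_fn_mk,
      PNat.mk_coe]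
    rw [Finset.univ_eq_attach,
      (n : ℕ).divisorsAntidiagonal.sum_attach fun x : ℕ × ℕ ↦ a x.1 * q ^ (x.1 * x.2),
      Nat.sum_divisorsAntidiagonal fun x y ↦ a x * q ^ (x * y), Finset.sum_mul]
    exact Finset.sum_congr rfl fun d hd ↦ by
      rw [Nat.mul_div_cancel' (Nat.dvd_of_mem_divisors hd)]
  have hsigma := (sigmaAntidiagonalEquivProd.hasSum_iff.mpr hs.hasSum).sigma hfiber
  rw [hasSum_pnat_iff_hasSum_succ (f := fun n ↦ (∑ d ∈ n.divisors, a d) * q ^ n)] at hsigma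
  rw [divisorSeries, hsigma.tsum_eq]
  exact hs.hasSum

lemma hasSum_divisorSeries (ha : ∀ n, ‖a n‖ ≤ C * n ^ k) (hq : ‖q‖ < 1) :
    HasSum (fun n : ℕ+ ↦ a n * (q ^ (n : ℕ) / (1 - q ^ (n : ℕ)))) (divisorSeries a q) :=
  (hasSum_divisorSeries_prod ha hq).prod_fiberwise fun n ↦ by
    simpa only [pow_mul] using (hasSum_pnat_geometric (norm_pow_lt_one hq n.ne_zero)).mul_left _

lemma hasSum_divisorSeries_of_hasSum {F : ℂ → ℂ} (ha : ∀ n, ‖a n‖ ≤ C * n ^ k) (hq : ‖q‖ < 1)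
    (hF : ∀ x : ℂ, ‖x‖ < 1 → HasSum (fun n : ℕ+ ↦ a n * x ^ (n : ℕ)) (F x)) :
    HasSum (fun m : ℕ+ ↦ F (q ^ (m : ℕ))) (divisorSeries a q) :=
  ((Equiv.prodComm ℕ+ ℕ+).hasSum_iff.mpr
    (hasSum_divisorSeries_prod ha hq)).prod_fiberwise fun m ↦ by
      simpa only [Function.comp_def, Equiv.prodComm_apply, Prod.swap_prod_mk, pow_mul'] using
        hF _ (norm_pow_lt_one hq m.ne_zero)

lemma hasSum_nat_divisorSeries (ha : ∀ n, ‖a n‖ ≤ C * n ^ k) (hq : ‖q‖ < 1) :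
    HasSum (fun n : ℕ ↦ a n * (q ^ n / (1 - q ^ n))) (divisorSeries a q) := by
  -- The term at `n = 0` vanishes because `1 / 0 = 0`.
  simpa using (hasSum_pnat_iff (f := fun n ↦ a n * (q ^ n / (1 - q ^ n)))).mp
    (hasSum_divisorSeries ha hq)

lemma hasSum_divisorSeries_odd {ε : ℂ} (ha : ∀ n, ‖a n‖ ≤ C * n ^ k)
    (hε : ∀ n, a (2 * n) = ε * a n) (hq : ‖q‖ < 1) :
    HasSum (fun n : ℕ ↦ a (2 * n + 1) * (q ^ (2 * n + 1) / (1 - q ^ (2 * n + 1))))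
      (divisorSeries a q - ε * divisorSeries a (q ^ 2)) := by
  have heven : HasSum (fun n : ℕ ↦ a (2 * n) * (q ^ (2 * n) / (1 - q ^ (2 * n))))
      (ε * divisorSeries a (q ^ 2)) := by
    simpa only [hε, pow_mul, mul_assoc] using
      (hasSum_nat_divisorSeries ha (norm_pow_lt_one hq two_ne_zero)).mul_left ε
  have hodd := hasSum_odd_of_hasSum_even (hasSum_nat_divisorSeries ha hq) heven
  exact hodd

/-- The relation `T₂ = 1 + ε`, checked on the odd-indexed terms of the Lambert series. -/
lemma divisorSeries_add_divisorSeries_neg {ε : ℂ} (ha : ∀ n, ‖a n‖ ≤ C * n ^ k)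
    (hε : ∀ n, a (2 * n) = ε * a n) (hq : ‖q‖ < 1) :
    divisorSeries a q + divisorSeries a (-q) =
      2 * (1 + ε) * divisorSeries a (q ^ 2) - 2 * ε * divisorSeries a (q ^ 4) := by
  have hq2 : ‖q ^ 2‖ < 1 := norm_pow_lt_one hq two_ne_zero
  have hqneg : ‖-q‖ < 1 := by rwa [norm_neg]
  have odd_term (n : ℕ) :
      2 * (a (2 * n + 1) * ((q ^ 2) ^ (2 * n + 1) / (1 - (q ^ 2) ^ (2 * n + 1)))) =
        a (2 * n + 1) * (q ^ (2 * n + 1) / (1 - q ^ (2 * n + 1))) +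
        a (2 * n + 1) * ((-q) ^ (2 * n + 1) / (1 - (-q) ^ (2 * n + 1))) := by
    have h₁ := one_sub_pow_ne_zero hq (n := 2 * n + 1) (by lia)
    have h₂ := one_sub_pow_ne_zero hqneg (n := 2 * n + 1) (by lia)
    have h₃ := one_sub_pow_ne_zero hq2 (n := 2 * n + 1) (by lia)
    rw [(odd_two_mul_add_one n).neg_pow] at h₂ ⊢
    rw [pow_right_comm] at h₃ ⊢
    generalize q ^ (2 * n + 1) = y at *
    field_simp
    ring
  have hodd := (hasSum_divisorSeries_odd ha hε hq2).mul_left 2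
  simp_rw [odd_term] at hodd
  have hsplit := hodd.unique
    ((hasSum_divisorSeries_odd ha hε hq).add (hasSum_divisorSeries_odd ha hε hqneg))
  rw [neg_sq, ← pow_mul] at hsplit
  linear_combination -hsplit

end DivisorSeries

/-- The rational function `κ(x) = x / (1 + x + x²) = ∑_{n ≥ 1} χ₋₃(n) xⁿ`, whose values at the
powers `q ^ m`, `m : ℤ`, add up to `2 E_{1,-3}`. -/
noncomputable def cubicKernel (x : ℂ) : ℂ := x / (1 + x + x ^ 2)

lemma cubicKernel_inv (x : ℂ) : cubicKernel x⁻¹ = cubicKernel x := by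
  rcases eq_or_ne x 0 with rfl | hx
  · rw [inv_zero]
  · have h : 1 + x⁻¹ + x⁻¹ ^ 2 = (1 + x + x ^ 2) / x ^ 2 := by
      field_simp
      ring
    rw [cubicKernel, cubicKernel, h]
    field_simp

/-- Partial fractions in `x`, the poles of `κ(x)` and `κ(xy)` being disjoint. -/
lemma cubicKernel_mul_cubicKernel {x y : ℂ} (hx : 1 + x + x ^ 2 ≠ 0)
    (hxy : 1 + x * y + (x * y) ^ 2 ≠ 0) (hy : 1 - y ^ 3 ≠ 0) :
    cubicKernel x * cubicKernel (x * y) =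
      y / (1 - y ^ 3) * ((1 + y) * (1 / (1 + x * y + (x * y) ^ 2) - 1 / (1 + x + x ^ 2)) +
        y * cubicKernel (x * y) - cubicKernel x) := by
  rw [mul_pow] at hxy
  simp only [cubicKernel, mul_pow]
  field_simp
  ring

lemma norm_χ₃_le_one (n : ℕ) : ‖χ₃ n‖ ≤ 1 := by
  unfold χ₃
  split_ifs <;> norm_num

lemma hasSum_χ₃_mul_pow {x : ℂ} (hx : ‖x‖ < 1) :
    HasSum (fun n : ℕ+ ↦ χ₃ n * x ^ (n : ℕ)) (cubicKernel x) := by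
  have hs : Summable fun n : ℕ ↦ χ₃ n * x ^ n :=
    Summable.of_norm_bounded (summable_geometric_of_lt_one (norm_nonneg x) hx) fun n ↦ by
      simpa using mul_le_mul_of_nonneg_right (norm_χ₃_le_one n) (norm_nonneg (x ^ n))
  obtain ⟨S, hS⟩ := hs
  have hχ (n : ℕ) : χ₃ (n + 2) = -χ₃ (n + 1) - χ₃ n := by
    have : n % 3 < 3 := Nat.mod_lt n three_pos
    simp only [χ₃, Nat.add_mod n]
    interval_cases n % 3 <;> norm_num
  have hS₁ : HasSum (fun n ↦ χ₃ (n + 1) * x ^ (n + 1)) S := by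
    simpa [χ₃] using (hasSum_nat_add_iff' 1).mpr hS
  have hS₂ : HasSum (fun n ↦ χ₃ (n + 2) * x ^ (n + 2)) (S - x) := by
    simpa [χ₃, Finset.sum_range_succ] using (hasSum_nat_add_iff' 2).mpr hS
  have hrec := (hS₁.mul_left (-x)).sub (hS.mul_left (x ^ 2))
  have hterm (n : ℕ) : -x * (χ₃ (n + 1) * x ^ (n + 1)) - x ^ 2 * (χ₃ n * x ^ n) =
      χ₃ (n + 2) * x ^ (n + 2) := by
    rw [hχ]
    ring
  simp only [hterm] at hrec
  have hκ : cubicKernel x = S := by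
    rw [cubicKernel, div_eq_iff (one_add_add_sq_ne_zero hx)]
    linear_combination -hS₂.unique hrec
  exact hκ ▸ (hasSum_pnat_iff_hasSum_succ (f := fun n ↦ χ₃ n * x ^ n)).mpr hS₁

lemma cubicKernel_sq {x : ℂ} (hx : 1 - x ≠ 0) (hx' : 1 + x + x ^ 2 ≠ 0) :
    cubicKernel x ^ 2 =
      (x / (1 - x) ^ 2 - 9 * (x ^ 3 / (1 - x ^ 3) ^ 2) - cubicKernel x) / 3 := by
  have h : 1 - x ^ 3 = (1 - x) * (1 + x + x ^ 2) := by ring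
  simp only [cubicKernel, h]
  field_simp
  ring

section Nome

variable {q : ℂ}

lemma one_sub_zpow_pow_three_ne_zero (hq : ‖q‖ < 1) {k : ℤ} (hk : k ≠ 0) :
    1 - (q ^ k) ^ 3 ≠ 0 := by
  rw [← zpow_natCast, ← zpow_mul, sub_ne_zero]
  exact (zpow_ne_one hq (by simpa using hk)).symm

lemma one_add_zpow_add_sq_ne_zero (hq : ‖q‖ < 1) (m : ℤ) : 1 + q ^ m + (q ^ m) ^ 2 ≠ 0 := by
  rcases eq_or_ne m 0 with rfl | hm
  · norm_num
  · intro h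
    refine one_sub_zpow_pow_three_ne_zero hq hm ?_
    linear_combination (1 - q ^ m) * h

lemma even_cubicKernel_zpow : (fun m : ℤ ↦ cubicKernel (q ^ m)).Even := fun m ↦ by
  simp only [zpow_neg, cubicKernel_inv]

lemma hasSum_cubicKernel_pow (hq : ‖q‖ < 1) :
    HasSum (fun m : ℕ+ ↦ cubicKernel (q ^ (m : ℕ))) (divisorSeries χ₃ q) :=
  hasSum_divisorSeries_of_hasSum (C := 1) (k := 0) (by simpa using norm_χ₃_le_one) hq
    fun _ ↦ hasSum_χ₃_mul_pow

lemma hasSum_cubicKernel_zpow (hq : ‖q‖ < 1) :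
    HasSum (fun m : ℤ ↦ cubicKernel (q ^ m)) (1 / 3 + 2 * divisorSeries χ₃ q) :=
  hasSum_int_of_even even_cubicKernel_zpow (by norm_num [cubicKernel])
    (by simpa only [zpow_natCast] using hasSum_cubicKernel_pow hq)

lemma hasSum_pow_div_one_sub_pow_sq (hq : ‖q‖ < 1) :
    HasSum (fun m : ℕ+ ↦ q ^ (m : ℕ) / (1 - q ^ (m : ℕ)) ^ 2) (divisorSeries (↑·) q) :=
  hasSum_divisorSeries_of_hasSum (C := 1) (k := 1) (F := fun x ↦ x / (1 - x) ^ 2) (by simp) hq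
    fun _ ↦ hasSum_pnat_natCast_mul_pow

lemma hasSum_cubicKernel_zpow_sq (hq : ‖q‖ < 1) :
    HasSum (fun m : ℤ ↦ cubicKernel (q ^ m) ^ 2)
      (1 / 9 + 2 * ((divisorSeries (↑·) q - 9 * divisorSeries (↑·) (q ^ 3) -
        divisorSeries χ₃ q) / 3)) := by
  have heven : (fun m : ℤ ↦ cubicKernel (q ^ m) ^ 2).Even := fun m ↦ by
    simp only [zpow_neg, cubicKernel_inv]
  have hpos := (((hasSum_pow_div_one_sub_pow_sq hq).sub
    ((hasSum_pow_div_one_sub_pow_sq (norm_pow_lt_one hq three_ne_zero)).mul_left 9)).sub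
      (hasSum_cubicKernel_pow hq)).div_const 3
  have hterm (m : ℕ+) := cubicKernel_sq (one_sub_pow_ne_zero hq m.ne_zero)
    (one_add_add_sq_ne_zero (norm_pow_lt_one hq m.ne_zero))
  simp_rw [pow_right_comm q 3, ← hterm] at hpos
  exact hasSum_int_of_even heven (by norm_num [cubicKernel])
    (by simpa only [zpow_natCast] using hpos)

lemma even_mul_zpow_div (hq : ‖q‖ < 1) (hq₀ : q ≠ 0) :
    (fun k : ℤ ↦ (k : ℂ) * (q ^ k * (1 + q ^ k) / (1 - (q ^ k) ^ 3))).Even := fun k ↦ by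
  rcases eq_or_ne k 0 with rfl | hk
  · rw [neg_zero]
  have hy₀ : q ^ k ≠ 0 := zpow_ne_zero k hq₀
  have hy : 1 - (q ^ k) ^ 3 ≠ 0 := one_sub_zpow_pow_three_ne_zero hq hk
  simp only [zpow_neg, Int.cast_neg]
  generalize q ^ k = y at *
  have hinv : 1 - y⁻¹ ^ 3 = -(1 - y ^ 3) / y ^ 3 := by
    field_simp
    ring
  rw [hinv]
  field_simp
  ring

lemma hasSum_int_mul_zpow_div (hq : ‖q‖ < 1) (hq₀ : q ≠ 0) :
    HasSum (fun k : ℤ ↦ (k : ℂ) * (q ^ k * (1 + q ^ k) / (1 - (q ^ k) ^ 3)))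
      (2 * (divisorSeries (↑·) q - divisorSeries (↑·) (q ^ 3))) := by
  have hq3 : ‖q ^ 3‖ < 1 := norm_pow_lt_one hq three_ne_zero
  have hlambert {x : ℂ} (hx : ‖x‖ < 1) : HasSum
      (fun n : ℕ+ ↦ (n : ℂ) * (x ^ (n : ℕ) / (1 - x ^ (n : ℕ)))) (divisorSeries (↑·) x) :=
    hasSum_divisorSeries (C := 1) (k := 1) (by simp) hx
  have hterm (n : ℕ+) :
      (n : ℂ) * (q ^ (n : ℕ) / (1 - q ^ (n : ℕ))) -
        n * ((q ^ 3) ^ (n : ℕ) / (1 - (q ^ 3) ^ (n : ℕ))) =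
      n * (q ^ (n : ℕ) * (1 + q ^ (n : ℕ)) / (1 - (q ^ (n : ℕ)) ^ 3)) := by
    have h₁ := one_sub_pow_ne_zero hq n.ne_zero
    have h₃ := one_sub_pow_ne_zero hq3 n.ne_zero
    rw [pow_right_comm] at h₃ ⊢
    generalize q ^ (n : ℕ) = y at *
    field_simp
    ring
  have hpos := (hlambert hq).sub (hlambert hq3)
  simp_rw [hterm] at hpos
  simpa only [zero_add] using hasSum_int_of_even (c := 0)
    (even_mul_zpow_div hq hq₀) (by simp) (by simpa only [zpow_natCast, Int.cast_natCast] using hpos)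

lemma hasSum_prod_cubicKernel_zpow_mul (hq : ‖q‖ < 1) :
    HasSum (fun p : ℤ × ℤ ↦ cubicKernel (q ^ p.2) * cubicKernel (q ^ (p.2 + p.1)))
      ((1 / 3 + 2 * divisorSeries χ₃ q) * (1 / 3 + 2 * divisorSeries χ₃ q)) := by
  have hκ := hasSum_cubicKernel_zpow hq
  have hmul := hasSum_mul_shift hκ.summable.norm hκ.summable.norm
  rw [hκ.tsum_eq] at hmul
  exact hmul

lemma summable_inv_one_add_zpow_sub (hq : ‖q‖ < 1) (hq₀ : q ≠ 0) :
    Summable fun m : ℤ ↦ 1 / (1 + q ^ (m + 1) + (q ^ (m + 1)) ^ 2) -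
      1 / (1 + q ^ m + (q ^ m) ^ 2) := by
  have hκ := hasSum_cubicKernel_zpow hq
  have hκ₁ := hasSum_add_right hκ 1
  have hκκ₁ := (hasSum_prod_cubicKernel_zpow_mul hq).summable.prod_factor 1
  have hcomb := (((hκκ₁.mul_left ((1 - q ^ 3) / q)).sub (hκ₁.summable.mul_left q)).add
    hκ.summable).div_const (1 + q)
  refine hcomb.congr fun m ↦ ?_
  have hq1 : 1 + q ≠ 0 := by
    simpa only [pow_one, sub_neg_eq_add] using
      one_sub_pow_ne_zero (q := -q) (by rwa [norm_neg]) one_ne_zero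
  have hq3 := one_sub_pow_ne_zero hq three_ne_zero
  have h₁ := one_add_zpow_add_sq_ne_zero hq (m + 1)
  rw [zpow_add_one₀ hq₀] at h₁ ⊢
  rw [cubicKernel_mul_cubicKernel (one_add_zpow_add_sq_ne_zero hq m) h₁ hq3]
  generalize cubicKernel (q ^ m * q) = κ₁
  field_simp
  ring

lemma tendsto_inv_one_add_zpow_atTop (hq : ‖q‖ < 1) :
    Tendsto (fun n : ℕ ↦ 1 / (1 + q ^ (n : ℤ) + (q ^ (n : ℤ)) ^ 2)) atTop (𝓝 1) := by
  have hpow := tendsto_pow_atTop_nhds_zero_of_norm_lt_one hq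
  have hcont : ContinuousAt (fun x : ℂ ↦ 1 / (1 + x + x ^ 2)) 0 := by
    fun_prop (disch := norm_num)
  simpa [Function.comp_def] using hcont.tendsto.comp hpow

lemma tendsto_inv_one_add_zpow_atBot (hq : ‖q‖ < 1) (hq₀ : q ≠ 0) :
    Tendsto (fun n : ℕ ↦ 1 / (1 + q ^ (-n : ℤ) + (q ^ (-n : ℤ)) ^ 2)) atTop (𝓝 0) := by
  have hpow := tendsto_pow_atTop_nhds_zero_of_norm_lt_one hq
  have hcont : ContinuousAt (fun x : ℂ ↦ x ^ 2 / (1 + x + x ^ 2)) 0 := by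
    fun_prop (disch := norm_num)
  refine Tendsto.congr (fun n ↦ ?_) (by simpa using hcont.tendsto.comp hpow)
  have hn := pow_ne_zero n hq₀
  simp only [Function.comp_apply, zpow_neg, zpow_natCast]
  field_simp
  ring

lemma hasSum_cubicKernel_zpow_mul (hq : ‖q‖ < 1) (hq₀ : q ≠ 0) {k : ℤ} (hk : k ≠ 0) :
    HasSum (fun m : ℤ ↦ cubicKernel (q ^ m) * cubicKernel (q ^ (m + k)))
      (k * (q ^ k * (1 + q ^ k) / (1 - (q ^ k) ^ 3)) -
        cubicKernel (q ^ k) * (1 / 3 + 2 * divisorSeries χ₃ q)) := by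
  have hκ := hasSum_cubicKernel_zpow hq
  have hκ_shift := hasSum_add_right hκ k
  have htel := hasSum_int_shift_sub (h := fun m : ℤ ↦ 1 / (1 + q ^ m + (q ^ m) ^ 2))
    (tendsto_inv_one_add_zpow_atBot hq hq₀) (tendsto_inv_one_add_zpow_atTop hq)
    (summable_inv_one_add_zpow_sub hq hq₀) k
  have hk3 := one_sub_zpow_pow_three_ne_zero hq hk
  have hk2 := one_add_zpow_add_sq_ne_zero hq k
  have hterm (m : ℤ) : cubicKernel (q ^ m) * cubicKernel (q ^ (m + k)) =
      q ^ k / (1 - (q ^ k) ^ 3) * ((1 + q ^ k) * (1 / (1 + q ^ (m + k) + (q ^ (m + k)) ^ 2) -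
        1 / (1 + q ^ m + (q ^ m) ^ 2)) + q ^ k * cubicKernel (q ^ (m + k)) -
          cubicKernel (q ^ m)) := by
    have hmk := one_add_zpow_add_sq_ne_zero hq (m + k)
    rw [zpow_add₀ hq₀] at hmk ⊢
    exact cubicKernel_mul_cubicKernel (one_add_zpow_add_sq_ne_zero hq m) hmk hk3
  have hvalue (G : ℂ) : k * (q ^ k * (1 + q ^ k) / (1 - (q ^ k) ^ 3)) - cubicKernel (q ^ k) * G =
      q ^ k / (1 - (q ^ k) ^ 3) * ((1 + q ^ k) * k • (1 - 0) + q ^ k * G - G) := by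
    rw [cubicKernel, sub_zero, zsmul_one]
    field_simp
    ring
  simp_rw [hterm]
  rw [hvalue]
  exact (((htel.mul_left (1 + q ^ k)).add (hκ_shift.mul_left (q ^ k))).sub hκ).mul_left _

lemma three_mul_divisorSeries_χ₃_sq (hq : ‖q‖ < 1) (hq₀ : q ≠ 0) :
    3 * divisorSeries χ₃ q ^ 2 + divisorSeries χ₃ q =
      divisorSeries (↑·) q - 3 * divisorSeries (↑·) (q ^ 3) := by
  set G : ℂ := 1 / 3 + 2 * divisorSeries χ₃ q
  set T : ℤ → ℂ := fun k ↦ k * (q ^ k * (1 + q ^ k) / (1 - (q ^ k) ^ 3))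
  set S : ℂ := 1 / 9 + 2 * ((divisorSeries (↑·) q - 9 * divisorSeries (↑·) (q ^ 3) -
    divisorSeries χ₃ q) / 3)
  have hκ : HasSum (fun m : ℤ ↦ cubicKernel (q ^ m)) G := hasSum_cubicKernel_zpow hq
  have hinner (k : ℤ) : HasSum (fun m : ℤ ↦ cubicKernel (q ^ m) * cubicKernel (q ^ (m + k)))
      (T k - cubicKernel (q ^ k) * G + if k = 0 then S + G / 3 else 0) := by
    rcases eq_or_ne k 0 with rfl | hk
    · convert hasSum_cubicKernel_zpow_sq hq using 1
      · simp only [add_zero, sq]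
      · norm_num [T, cubicKernel]
        ring
    · simpa only [if_neg hk, add_zero] using hasSum_cubicKernel_zpow_mul hq hq₀ hk
  have hsquare := (hasSum_prod_cubicKernel_zpow_mul hq).prod_fiberwise hinner
  have houter := ((hasSum_int_mul_zpow_div hq hq₀).sub (hκ.mul_right G)).add
    (hasSum_ite_eq 0 (S + G / 3))
  linear_combination (3 / 8) * hsquare.unique houter

end Nome

section Eisenstein

variable {τ : ℂ}

lemma norm_qq_lt_one (hτ : 0 < τ.im) : ‖qq τ‖ < 1 := by
  rw [qq, Complex.norm_exp, Real.exp_lt_one_iff]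
  have h : (2 * Real.pi * I * τ).re = -(2 * Real.pi * τ.im) := by simp
  rw [h, neg_lt_zero]
  positivity

lemma qq_natCast_mul (n : ℕ) (τ : ℂ) : qq (n * τ) = qq τ ^ n := by
  rw [qq, qq, ← Complex.exp_nat_mul]
  ring_nf

lemma qq_add_one (τ : ℂ) : qq (τ + 1) = qq τ := by
  rw [qq, mul_add, mul_one, Complex.exp_add, Complex.exp_two_pi_mul_I, mul_one, qq]

lemma qq_add_one_div_two (τ : ℂ) : qq ((τ + 1) / 2) = -qq (τ / 2) := by
  rw [qq, show 2 * Real.pi * I * ((τ + 1) / 2) =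
    2 * Real.pi * I * (τ / 2) + Real.pi * I by ring, Complex.exp_add,
    Complex.exp_pi_mul_I, mul_neg_one, qq]

lemma conj_qq (τ : ℂ) : conj (qq τ) = qq (-conj τ) := by
  simp only [qq, ← Complex.exp_conj, map_mul, map_ofNat, conj_ofReal, conj_I]
  ring_nf

lemma E₂_eq (τ : ℂ) : E₂ τ = 1 - 24 * divisorSeries (↑·) (qq τ) := by
  simp only [E₂, sigmaC, divisorSeries, pow_one]

lemma E₁₃_eq (τ : ℂ) : E₁₃ τ = 1 / 6 + divisorSeries χ₃ (qq τ) := rfl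

lemma E₂_add_one (τ : ℂ) : E₂ (τ + 1) = E₂ τ := by
  rw [E₂, E₂, qq_add_one]

lemma E₁₃_add_one (τ : ℂ) : E₁₃ (τ + 1) = E₁₃ τ := by
  rw [E₁₃, E₁₃, qq_add_one]

lemma conj_E₁₃ (τ : ℂ) : conj (E₁₃ τ) = E₁₃ (-conj τ) := by
  have hχ (n : ℕ) : conj (χ₃ n) = χ₃ n := by
    simp only [χ₃, apply_ite conj, map_one, map_neg, map_zero]
  simp only [E₁₃, map_add, map_div₀, map_one, map_ofNat, conj_tsum, map_mul, map_sum, map_pow, hχ,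
    conj_qq]

lemma sq_six_mul_E₁₃ (hτ : 0 < τ.im) : (6 * E₁₃ τ) ^ 2 = E₃₂ τ := by
  have h := three_mul_divisorSeries_χ₃_sq (norm_qq_lt_one hτ) (Complex.exp_ne_zero _)
  have h3 : qq (3 * τ) = qq τ ^ 3 := mod_cast qq_natCast_mul 3 τ
  rw [E₃₂, E₂_eq, E₂_eq, E₁₃_eq, h3]
  linear_combination 12 * h

lemma E₁₃_div_two_add (hτ : 0 < τ.im) : E₁₃ (τ / 2) + E₁₃ ((τ + 1) / 2) = 2 * E₁₃ (2 * τ) := by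
  have hχ (n : ℕ) : χ₃ (2 * n) = -1 * χ₃ n := by
    have : n % 3 < 3 := Nat.mod_lt n three_pos
    simp only [χ₃, Nat.mul_mod 2 n]
    interval_cases n % 3 <;> norm_num
  have h4 : qq (2 * τ) = qq (τ / 2) ^ 4 := by
    rw [← qq_natCast_mul]
    ring_nf
  have h := divisorSeries_add_divisorSeries_neg (C := 1) (k := 0) (by simpa using norm_χ₃_le_one)
    hχ (norm_qq_lt_one (τ := τ / 2) (by simpa using hτ))
  rw [E₁₃_eq, E₁₃_eq, E₁₃_eq, qq_add_one_div_two, h4]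
  linear_combination h

lemma E₂_div_two_add (hτ : 0 < τ.im) :
    E₂ (τ / 2) + E₂ ((τ + 1) / 2) = 6 * E₂ τ - 4 * E₂ (2 * τ) := by
  have h2 : qq τ = qq (τ / 2) ^ 2 := by
    rw [← qq_natCast_mul]
    ring_nf
  have h4 : qq (2 * τ) = qq (τ / 2) ^ 4 := by
    rw [← qq_natCast_mul]
    ring_nf
  have h := divisorSeries_add_divisorSeries_neg (a := (↑·)) (ε := 2) (C := 1) (k := 1) (by simp)
    (by simp) (norm_qq_lt_one (τ := τ / 2) (by simpa using hτ))
  rw [E₂_eq, E₂_eq, E₂_eq, E₂_eq, qq_add_one_div_two, h4, h2]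
  linear_combination -24 * h

lemma E₃₂_div_two_add (hτ : 0 < τ.im) :
    E₃₂ (τ / 2) + E₃₂ ((τ + 1) / 2) = 6 * E₃₂ τ - 4 * E₃₂ (2 * τ) := by
  have hshift : E₂ (3 * ((τ + 1) / 2)) = E₂ ((3 * τ + 1) / 2) := by
    rw [← E₂_add_one ((3 * τ + 1) / 2)]
    ring_nf
  have h₁ := E₂_div_two_add hτ
  have h₃ := E₂_div_two_add (τ := 3 * τ) (by simpa using hτ)
  simp only [E₃₂, hshift, mul_div_assoc, mul_left_comm (3 : ℂ) 2] at h₃ ⊢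
  linear_combination (3 * h₃ - h₁) / 2

lemma f₃_zero_mul_f₃_one (hτ : 0 < τ.im) : f₃ 0 τ * f₃ 1 τ = E₃₂ τ := by
  have ha := sq_six_mul_E₁₃ (τ := τ / 2) (by simpa using hτ)
  have hb := sq_six_mul_E₁₃ (τ := (τ + 1) / 2) (by simpa using hτ)
  have hc := sq_six_mul_E₁₃ (τ := 2 * τ) (by simpa using hτ)
  have habc := E₁₃_div_two_add hτ
  have hE := E₃₂_div_two_add hτ
  simp only [f₃]
  generalize E₁₃ (τ / 2) = a at *
  generalize E₁₃ ((τ + 1) / 2) = b at *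
  generalize E₁₃ (2 * τ) = c at *
  calc (6 * c + (-1) ^ 0 * I * √3 * (a - b)) * (6 * c + (-1) ^ 1 * I * √3 * (a - b))
    _ = (6 * c) ^ 2 + 3 * (a - b) ^ 2 := by
      linear_combination (a - b) ^ 2 * (ofReal_sqrt_three_sq - (√3 : ℂ) ^ 2 * I_sq)
    _ = (4 * (6 * c) ^ 2 + (6 * a) ^ 2 + (6 * b) ^ 2) / 6 := by
      linear_combination -3 * (a + b + 2 * c) * habc
    _ = E₃₂ τ := by
      rw [ha, hb, hc]
      linear_combination hE / 6

lemma G2_eq_E₂ (z : UpperHalfPlane) : EisensteinSeries.G2 z = Real.pi ^ 2 / 3 * E₂ z := by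
  rw [EisensteinSeries.G2_eq_tsum_cexp, riemannZeta_two, E₂,
    tsum_pnat_eq_tsum_succ (f := fun n ↦ (ArithmeticFunction.sigma 1 n : ℂ) *
      Complex.exp (2 * Real.pi * I * z) ^ n)]
  simp only [sigmaC, qq, ArithmeticFunction.sigma_apply, pow_one, Nat.cast_sum]
  ring

lemma E₂_inv_neg (hτ : 0 < τ.im) : E₂ (-τ)⁻¹ = τ ^ 2 * E₂ τ - 6 * I * τ / Real.pi := by
  have h := EisensteinSeries.G2_S_transform ⟨τ, hτ⟩
  rw [UpperHalfPlane.modular_S_smul, G2_eq_E₂, G2_eq_E₂] at h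
  simp only at h
  have hτ₀ : τ ≠ 0 := by
    rintro rfl
    simp at hτ
  have hpi : (Real.pi : ℂ) ≠ 0 := Complex.ofReal_ne_zero.mpr Real.pi_ne_zero
  have hscale : E₂ τ = 3 / Real.pi ^ 2 * (Real.pi ^ 2 / 3 * E₂ τ) := by field_simp
  rw [hscale, h]
  field_simp
  ring

lemma E₃₂_inv_neg_three_mul (hτ : 0 < τ.im) : E₃₂ (-(3 * τ))⁻¹ = -3 * τ ^ 2 * E₃₂ τ := by
  have h₃ := E₂_inv_neg (τ := 3 * τ) (by simpa using hτ)
  have hinv : 3 * (-(3 * τ))⁻¹ = (-τ)⁻¹ := by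
    rw [← mul_neg, mul_inv, mul_inv_cancel_left₀ three_ne_zero]
  rw [E₃₂, E₃₂, hinv, h₃, E₂_inv_neg hτ]
  ring

lemma exists_E₁₃_I_mul_eq_ofReal (y : ℝ) : ∃ r : ℝ, E₁₃ (I * y) = r := by
  refine Complex.conj_eq_iff_real.mp ?_
  rw [conj_E₁₃]
  simp

lemma re_mul_E₁₃_eq_zero : ((3 + I * √3) / 12 * E₁₃ ((3 + I * √3) / 12)).re = 0 := by
  have hs := ofReal_sqrt_three_sq
  set u : ℂ := (3 + I * √3) / 12 with hu
  have hinv : (-(3 * u))⁻¹ = I * (√3 / 3 : ℝ) - 1 := by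
    have hne : (3 : ℂ) + I * √3 ≠ 0 := fun h ↦ by simpa using congrArg re h
    rw [hu]
    push_cast
    field_simp
    linear_combination -I ^ 2 * hs - 3 * I_sq
  obtain ⟨r, hr⟩ := exists_E₁₃_I_mul_eq_ofReal (√3 / 3)
  rw [← sub_add_cancel (I * _) 1, ← hinv, E₁₃_add_one] at hr
  have hE := E₃₂_inv_neg_three_mul (τ := u) (by simp [hu])
  rw [← sq_six_mul_E₁₃ (by simp [hinv]), ← sq_six_mul_E₁₃ (by simp [hu]), hr] at hE
  have hre : (√3 * (u * E₁₃ u)).re = 0 := re_eq_zero_of_sq_eq_neg_sq (r := r) <| by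
    linear_combination u ^ 2 * E₁₃ u ^ 2 * hs + hE / 36
  simpa using hre

lemma f₃_zero_elliptic_point : f₃ 0 ((3 + I * √3) / 6) = 0 := by
  set u : ℂ := (3 + I * √3) / 12 with hu
  have hτ : (3 + I * √3) / 6 = 2 * u := by rw [hu]; ring
  have hconj : (2 * u + 1) / 2 = -conj u + 1 := by
    simp only [hu, map_div₀, map_add, map_mul, map_ofNat, conj_I, conj_ofReal]
    ring
  have hsum := E₁₃_div_two_add (τ := 2 * u) (by simp [hu])
  rw [hconj, E₁₃_add_one, ← conj_E₁₃, mul_div_cancel_left₀ u two_ne_zero] at hsum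
  calc f₃ 0 ((3 + I * √3) / 6)
    _ = 12 * (u * E₁₃ u + conj (u * E₁₃ u)) := by
      rw [hτ, f₃, hconj, E₁₃_add_one, ← conj_E₁₃, mul_div_cancel_left₀ u two_ne_zero, map_mul]
      simp only [hu, map_div₀, map_add, map_mul, map_ofNat, conj_I, conj_ofReal] at hsum ⊢
      linear_combination -3 * hsum
    _ = 0 := by
      rw [add_conj, re_mul_E₁₃_eq_zero]
      simp

lemma f₃_succ (j : ℕ) (τ : ℂ) : f₃ (j + 1) τ = f₃ j (τ + 1) := by
  have h₁ : E₁₃ (2 * (τ + 1)) = E₁₃ (2 * τ) := by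
    rw [← E₁₃_add_one (2 * τ), ← E₁₃_add_one (2 * τ + 1)]
    ring_nf
  have h₂ : E₁₃ ((τ + 1 + 1) / 2) = E₁₃ (τ / 2) := by
    rw [← E₁₃_add_one (τ / 2)]
    ring_nf
  rw [f₃, f₃, h₁, h₂]
  ring

end Eisenstein

theorem stmt15 :
    (∀ τ : ℂ, 0 < τ.im → f₃ 0 τ * f₃ 1 τ = E₃₂ τ) ∧
    (∀ j : ℕ, j < 2 → f₃ j (((-1 : ℂ) ^ j * 3 + Complex.I * Real.sqrt 3) / 6) = 0) := by
  refine ⟨fun τ hτ ↦ f₃_zero_mul_f₃_one hτ, fun j hj ↦ ?_⟩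
  interval_cases j
  · simpa using f₃_zero_elliptic_point
  · rw [f₃_succ, ← f₃_zero_elliptic_point]
    ring_nf
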